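/- arXiv:math/0403546 — 3 statements merged into one kernel-verified Lean document; each statement's English description precedes it below -/
import Mathlib

section
/- Let P be a nonempty unbounded polyhedron in ℝ^n (an intersection of finitely many closed halfspaces) that contains no line. Let 𝓕 be the collection of nonempty bounded faces of P. Then Σ_{F ∈ 𝓕} (−1)^{dim(F)} = 1, where dim(F) denotes the dimension of the affine hull of the face F. -/
/-!
The proof shows more generally that the alternating sum is `1` for every nonempty line-free
polyhedron `P`, by induction on dimension, sweeping `P` by the level sets of a linear functional.

Write `P` by inequalities `c i x ≤ b i`. The nonempty faces of `P` correspond to the sets `J` that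
occur as the set of active inequalities at some point of `P`; the points with active set exactly
`J` form a relatively open cell `U_J` (`cell`), the relative interior of the face, and the face has
direction `⋂ i ∈ J, ker (c i)` (`exists_eq_face`, `direction_face`).

If `P` is not a point, there is a linear functional `l`, nonconstant on `P`, whose sublevel sets in
`P` are bounded (`exists_functional`). The slice of `P` at `l = t` is a polytope of smaller
dimension whose cells are the nonempty `U_J ∩ {l = t}`, so by induction
`∑_J s_J 1[t ∈ l(U_J)] = 1[t ∈ l(P)]`, where `s_J = (-1) ^ dim F_J` if `l` is constant on the face
`F_J` and `s_J = -(-1) ^ dim F_J` otherwise. Apply the Euler functional `∑ t, (f t - f (t⁻))`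
(`HasEuler`) to both sides, as functions of `t`. It takes the value `1` on a point, `-1` on a
bounded open interval, `0` on `(a, ∞)`, and `1` on `[a, b]` and `[a, ∞)`. Since `l(U_J)` is a
point, a bounded open interval or a ray `(a, ∞)`, the last exactly when `F_J` is unbounded
(`hasEuler_image_cell`), the left side becomes `∑ (-1) ^ dim F_J` over bounded faces, and the right
side becomes `1` (`hasEuler_image_poly`).
-/

open Filter Topology

set_option linter.unusedSectionVars false

namespace BoundedFaces

/-! ### The Euler functional on the line -/

/-- `HasEuler f k`: for every finite set `T` of reals containing a suitable finite set of
breakpoints of `f`, and every `δ > 0` below the gaps of `T`, the sum over `t ∈ T` of the jumps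
`f t - f (t - δ)` equals `k`. This is the Euler functional `∑ t, (f t - f (t⁻))` for piecewise
constant `f`; left jumps are used so that `[a, ∞)` gets `1` and `(a, ∞)` gets `0`. -/
def HasEuler (f : ℝ → ℤ) (k : ℤ) : Prop :=
  ∃ e : Finset ℝ, ∀ (T : Finset ℝ) (δ : ℝ), e ⊆ T → 0 < δ →
    (∀ s ∈ T, ∀ t ∈ T, s < t → s + δ < t) → ∑ t ∈ T, (f t - f (t - δ)) = k

theorem exists_gap (T : Finset ℝ) :
    ∃ δ : ℝ, 0 < δ ∧ ∀ s ∈ T, ∀ t ∈ T, s < t → s + δ < t := by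
  have h : ∀ᶠ δ in 𝓝[>] (0 : ℝ), ∀ s ∈ T, ∀ t ∈ T, s < t → s + δ < t := by
    rw [Filter.eventually_all_finset]
    intro s _
    rw [Filter.eventually_all_finset]
    intro t _
    by_cases hst : s < t
    · have : ∀ᶠ δ in 𝓝[>] (0 : ℝ), δ < t - s :=
        nhdsWithin_le_nhds (gt_mem_nhds (sub_pos.2 hst))
      filter_upwards [this] with δ hδ _
      linarith
    · exact Eventually.of_forall fun _ h => absurd h hst
  obtain ⟨δ, hδ, h0⟩ := (h.and self_mem_nhdsWithin).exists
  exact ⟨δ, h0, hδ⟩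

theorem HasEuler.unique {f : ℝ → ℤ} {k k' : ℤ} (h : HasEuler f k) (h' : HasEuler f k') :
    k = k' := by
  classical
  obtain ⟨e, he⟩ := h
  obtain ⟨e', he'⟩ := h'
  obtain ⟨δ, h0, hδ⟩ := exists_gap (e ∪ e')
  rw [← he _ δ Finset.subset_union_left h0 hδ, he' _ δ Finset.subset_union_right h0 hδ]

theorem HasEuler.sum {α : Type*} [Fintype α] {f : α → ℝ → ℤ} {k : α → ℤ} (s : α → ℤ)
    (h : ∀ a, HasEuler (f a) (k a)) :
    HasEuler (fun t => ∑ a, s a * f a t) (∑ a, s a * k a) := by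
  classical
  choose e he using h
  refine ⟨Finset.univ.biUnion e, fun T δ hT h0 hδ => ?_⟩
  simp only [← Finset.sum_sub_distrib, ← mul_sub]
  rw [Finset.sum_comm]
  refine Finset.sum_congr rfl fun a _ => ?_
  rw [← Finset.mul_sum, he a T δ ((Finset.subset_biUnion_of_mem e (Finset.mem_univ a)).trans hT)
    h0 hδ]

open Classical in
/-- The `ℤ`-valued indicator function of a set of reals. -/
noncomputable def ind (A : Set ℝ) (t : ℝ) : ℤ := if t ∈ A then 1 else 0

/-- An indicator whose only left jump, of size `k`, is at `a` has Euler number `k`. -/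
theorem hasEuler_of_jump {A : Set ℝ} {k : ℤ} (e : Finset ℝ) (a : ℝ) (ha : a ∈ e)
    (h : ∀ t δ : ℝ, 0 < δ → (∀ s ∈ e, s < t → s + δ < t) → (∀ s ∈ e, t < s → t + δ < s) →
      ind A t - ind A (t - δ) = if t = a then k else 0) :
    HasEuler (ind A) k := by
  refine ⟨e, fun T δ hT h0 hδ => ?_⟩
  rw [Finset.sum_congr rfl fun t ht => h t δ h0 (fun s hs => hδ s (hT hs) t ht)
    (fun s hs => hδ t ht s (hT hs))]
  simp [hT ha]

theorem hasEuler_empty : HasEuler (ind ∅) 0 := ⟨∅, by simp [ind]⟩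

theorem hasEuler_singleton (a : ℝ) : HasEuler (ind {a}) 1 := by
  refine hasEuler_of_jump {a} a (by simp) fun t δ h0 h1 h2 => ?_
  have h1 := h1 a (by simp)
  simp only [ind, Set.mem_singleton_iff]
  split_ifs <;> first | rfl | (exfalso; grind)

theorem hasEuler_Ici (a : ℝ) : HasEuler (ind (Set.Ici a)) 1 := by
  refine hasEuler_of_jump {a} a (by simp) fun t δ h0 h1 h2 => ?_
  have h1 := h1 a (by simp)
  simp only [ind, Set.mem_Ici]
  split_ifs <;> first | rfl | (exfalso; grind)

theorem hasEuler_Ioi (a : ℝ) : HasEuler (ind (Set.Ioi a)) 0 := by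
  refine hasEuler_of_jump {a} a (by simp) fun t δ h0 h1 h2 => ?_
  have h1 := h1 a (by simp)
  simp only [ind, Set.mem_Ioi]
  split_ifs <;> first | rfl | (exfalso; grind)

theorem hasEuler_Icc {a b : ℝ} (hab : a ≤ b) : HasEuler (ind (Set.Icc a b)) 1 := by
  refine hasEuler_of_jump {a, b} a (by simp) fun t δ h0 h1 h2 => ?_
  have h1a := h1 a (by simp)
  have h1b := h1 b (by simp)
  simp only [ind, Set.mem_Icc]
  split_ifs <;> first | rfl | (exfalso; grind)

theorem hasEuler_Ioo {a b : ℝ} (hab : a < b) : HasEuler (ind (Set.Ioo a b)) (-1) := by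
  refine hasEuler_of_jump {a, b} b (by simp) fun t δ h0 h1 h2 => ?_
  have h1a := h1 a (by simp)
  have h1b := h1 b (by simp)
  simp only [ind, Set.mem_Ioo]
  split_ifs <;> first | rfl | (exfalso; grind)

theorem hasEuler_open {A : Set ℝ} (ho : IsOpen A) (hc : A.OrdConnected) (hne : A.Nonempty)
    (hb : BddBelow A) [Decidable (BddAbove A)] :
    HasEuler (ind A) (if BddAbove A then -1 else 0) := by
  have hlow : ∀ x ∈ A, sInf A < x := fun x hx => by
    obtain ⟨y, hy, hyA⟩ := Filter.Eventually.exists_lt (p := (· ∈ A)) (ho.mem_nhds hx)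
    exact (csInf_le hb hyA).trans_lt hy
  split_ifs with h
  · have hup : ∀ x ∈ A, x < sSup A := fun x hx => by
      obtain ⟨y, hy, hyA⟩ := Filter.Eventually.exists_gt (p := (· ∈ A)) (ho.mem_nhds hx)
      exact hy.trans_le (le_csSup h hyA)
    have : A = Set.Ioo (sInf A) (sSup A) :=
      Set.Subset.antisymm (fun x hx => ⟨hlow x hx, hup x hx⟩)
        (IsConnected.Ioo_csInf_csSup_subset ⟨hne, hc.isPreconnected⟩ hb h)
    obtain ⟨x, hx⟩ := hne
    rw [this]
    exact hasEuler_Ioo ((hlow x hx).trans (hup x hx))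
  · have : A = Set.Ioi (sInf A) :=
      Set.Subset.antisymm hlow (hc.isPreconnected.Ioi_csInf_subset hb h)
    rw [this]
    exact hasEuler_Ioi _

/-! ### Polyhedra, cells and faces -/

section Poly

variable {E : Type*} [NormedAddCommGroup E] [NormedSpace ℝ E] [FiniteDimensional ℝ E]
  {ι : Type*} [Fintype ι] (c : ι → E →ₗ[ℝ] ℝ) (b : ι → ℝ)

/-- The polyhedron cut out of the affine subspace `p + W` by the inequalities `c i x ≤ b i`.
Carrying `W` and `p` lets hyperplane slices keep the same inequalities. -/
def poly (W : Submodule ℝ E) (p : E) : Set E := {x | x - p ∈ W ∧ ∀ i, c i x ≤ b i}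

open Classical in
/-- The set of inequalities that hold with equality at `x`. -/
noncomputable def act (x : E) : Finset ι := Finset.univ.filter fun i => c i x = b i

/-- The points of the polyhedron whose active set is exactly `J`: when nonempty, the relative
interior of the face `face c b W p J`. -/
def cell (W : Submodule ℝ E) (p : E) (J : Finset ι) : Set E :=
  {x | x ∈ poly c b W p ∧ act c b x = J}

/-- The points of the polyhedron at which all inequalities in `J` are active. -/
def face (W : Submodule ℝ E) (p : E) (J : Finset ι) : Set E :=
  {x | x ∈ poly c b W p ∧ J ⊆ act c b x}

/-- The vectors of `W` killed by all `c i`, `i ∈ J`: the direction of the affine hull of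
`face c b W p J` whenever `cell c b W p J` is nonempty. -/
def dirs (W : Submodule ℝ E) (J : Finset ι) : Submodule ℝ E := W ⊓ ⨅ i ∈ J, (c i).ker

variable {c b} {W : Submodule ℝ E} {p : E} {J : Finset ι}


theorem mem_act {x : E} {i : ι} : i ∈ act c b x ↔ c i x = b i := by simp [act]

theorem mem_dirs {v : E} : v ∈ dirs c W J ↔ v ∈ W ∧ ∀ i ∈ J, c i v = 0 := by
  simp [dirs, Submodule.mem_iInf]

theorem cell_subset_face : cell c b W p J ⊆ face c b W p J := fun _ hx => ⟨hx.1, hx.2.ge⟩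

theorem sub_mem_dirs {x y : E} (hx : x ∈ face c b W p J) (hy : y ∈ face c b W p J) :
    y - x ∈ dirs c W J := by
  refine mem_dirs.2 ⟨by simpa using W.sub_mem hy.1.1 hx.1.1, fun i hi => ?_⟩
  rw [map_sub, mem_act.1 (hx.2 hi), mem_act.1 (hy.2 hi), sub_self]

/-- Cells are relatively open. -/
theorem cell_eventually {x v : E} (hx : x ∈ cell c b W p J) (hv : v ∈ dirs c W J) :
    ∀ᶠ s in 𝓝 (0 : ℝ), x + s • v ∈ cell c b W p J := by
  rw [mem_dirs] at hv
  have h : ∀ᶠ s in 𝓝 (0 : ℝ), ∀ i, i ∉ J → c i (x + s • v) < b i := by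
    rw [Filter.eventually_all]
    intro i
    by_cases hi : i ∈ J
    · exact Eventually.of_forall fun _ h => absurd hi h
    have hlt : c i x < b i := lt_of_le_of_ne (hx.1.2 i) fun h => hi (hx.2 ▸ mem_act.2 h)
    have ht : Tendsto (fun s : ℝ => c i x + s * c i v) (𝓝 0) (𝓝 (c i x + 0 * c i v)) :=
      (Continuous.tendsto (by fun_prop) 0)
    rw [zero_mul, add_zero] at ht
    filter_upwards [ht.eventually_lt_const hlt] with s hs _
    simpa using hs
  filter_upwards [h] with s hs
  have heq : ∀ i ∈ J, c i (x + s • v) = b i := fun i hi => by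
    simp [hv.2 i hi, mem_act.1 (hx.2.symm ▸ hi : i ∈ act c b x)]
  refine ⟨⟨?_, fun i => ?_⟩, ?_⟩
  · rw [add_sub_right_comm]
    exact W.add_mem hx.1.1 (W.smul_mem s hv.1)
  · by_cases hi : i ∈ J
    · exact (heq i hi).le
    · exact (hs i hi).le
  · ext i
    rw [mem_act]
    by_cases hi : i ∈ J
    · simp [hi, heq i hi]
    · exact iff_of_false (hs i hi).ne hi

theorem combo_mem_poly {x y : E} (hx : x ∈ poly c b W p) (hy : y ∈ poly c b W p) {α β : ℝ}
    (hα : 0 ≤ α) (hβ : 0 ≤ β) (h : α + β = 1) : α • x + β • y ∈ poly c b W p := by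
  refine ⟨?_, fun i => ?_⟩
  · have : α • x + β • y - p = α • (x - p) + β • (y - p) := by
      rw [smul_sub, smul_sub, sub_add_sub_comm, ← add_smul, h, one_smul]
    rw [this]
    exact W.add_mem (W.smul_mem _ hx.1) (W.smul_mem _ hy.1)
  · have h1 := mul_le_mul_of_nonneg_left (hx.2 i) hα
    have h2 := mul_le_mul_of_nonneg_left (hy.2 i) hβ
    have h3 : b i = α * b i + β * b i := by rw [← add_mul, h, one_mul]
    simp only [map_add, map_smul, smul_eq_mul]
    linarith

theorem act_combo {x y : E} (hx : x ∈ poly c b W p) (hy : y ∈ poly c b W p) {α β : ℝ}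
    (hα : 0 < α) (hβ : 0 < β) (h : α + β = 1) {i : ι} :
    i ∈ act c b (α • x + β • y) ↔ i ∈ act c b x ∧ i ∈ act c b y := by
  have h1 := hx.2 i
  have h2 := hy.2 i
  have h3 : b i = α * b i + β * b i := by rw [← add_mul, h, one_mul]
  simp only [mem_act, map_add, map_smul, smul_eq_mul]
  constructor
  · intro h4
    constructor <;> nlinarith
  · rintro ⟨h4, h5⟩
    rw [h4, h5, ← h3]

theorem combo_mem_cell {x y : E} (hx : x ∈ cell c b W p J) (hy : y ∈ face c b W p J) {α β : ℝ}
    (hα : 0 < α) (hβ : 0 < β) (h : α + β = 1) : α • x + β • y ∈ cell c b W p J := by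
  refine ⟨combo_mem_poly hx.1 hy.1 hα.le hβ.le h, ?_⟩
  ext i
  rw [act_combo hx.1 hy.1 hα hβ h, hx.2]
  exact ⟨fun h => h.1, fun h => ⟨h, hy.2 h⟩⟩

theorem convex_poly : Convex ℝ (poly c b W p) := fun _ hx _ hy _ _ hα hβ h =>
  combo_mem_poly hx hy hα hβ h

theorem convex_cell : Convex ℝ (cell c b W p J) := by
  rw [convex_iff_forall_pos]
  exact fun x hx y hy α β hα hβ h => combo_mem_cell hx (cell_subset_face hy) hα hβ h

theorem isClosed_poly : IsClosed (poly c b W p) := by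
  have : poly c b W p = (fun x => x - p) ⁻¹' (W : Set E) ∩ ⋂ i, {x | c i x ≤ b i} := by
    ext x; simp [poly]
  rw [this]
  refine IsClosed.inter ((W.closed_of_finiteDimensional).preimage (by fun_prop)) ?_
  exact isClosed_iInter fun i =>
    isClosed_le (LinearMap.continuous_of_finiteDimensional _) continuous_const

theorem ordConnected_image {A : Set E} (hA : Convex ℝ A) (l : E →ₗ[ℝ] ℝ) :
    (l '' A).OrdConnected := (hA.linear_image l).ordConnected

theorem finrank_inf_ker {D : Submodule ℝ E} {l : E →ₗ[ℝ] ℝ} (h : ¬ D ≤ l.ker) :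
    Module.finrank ℝ ↥(D ⊓ l.ker) + 1 = Module.finrank ℝ D := by
  have hne : l.domRestrict D ≠ 0 := by
    intro h0
    apply h
    intro x hx
    exact LinearMap.congr_fun h0 ⟨x, hx⟩
  have hk := Module.Dual.finrank_ker_add_one_of_ne_zero hne
  have : (l.domRestrict D).ker = l.ker.comap D.subtype := rfl
  rw [this, ← Submodule.finrank_map_subtype_eq, Submodule.map_comap_subtype] at hk
  exact hk

theorem dirs_inf (l : E →ₗ[ℝ] ℝ) : dirs c (W ⊓ l.ker) J = dirs c W J ⊓ l.ker := by
  simp only [dirs]; exact inf_right_comm _ _ _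

/-- A line-free polyhedron with at least two points carries a linear functional that is not
constant on it and has bounded sublevel sets. -/
theorem exists_functional (hp : ∀ v ∈ W, (∀ i, c i v = 0) → v = 0) {x y : E}
    (hx : x ∈ poly c b W p) (hy : y ∈ poly c b W p) (hxy : x ≠ y) :
    ∃ l : E →ₗ[ℝ] ℝ, (∃ x ∈ poly c b W p, ∃ y ∈ poly c b W p, l x ≠ l y) ∧
      ∀ t, Bornology.IsBounded {x ∈ poly c b W p | l x ≤ t} := by
  by_cases hb : Bornology.IsBounded (poly c b W p)
  · have : ¬ ∀ l : Module.Dual ℝ E, l (x - y) = 0 := by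
      rw [Module.forall_dual_apply_eq_zero_iff]
      exact sub_ne_zero.2 hxy
    push Not at this
    obtain ⟨l, hl⟩ := this
    rw [map_sub, sub_ne_zero] at hl
    exact ⟨l, ⟨x, hx, y, hy, hl⟩, fun t => hb.subset fun _ h => h.1⟩
  -- For unbounded `P` take `l = -∑ c i`: a bound `l ≤ t` together with `c i ≤ b i` bounds every
  -- `c i` from both sides, and the map `(c i)ᵢ` is injective on `W`.
  · have hsub : ∀ t, Bornology.IsBounded {x ∈ poly c b W p | (-∑ i, c i) x ≤ t} := by
      intro t
      let C : W →ₗ[ℝ] (ι → ℝ) := (LinearMap.pi c).domRestrict W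
      obtain ⟨K, -, hK⟩ := C.exists_antilipschitzWith (by
        rw [LinearMap.ker_eq_bot']
        intro v hv
        exact Subtype.ext (hp v v.2 fun i => congrFun hv i))
      have hB := hK.isBounded_preimage
        (Metric.isBounded_Icc (fun i => b i - t - ∑ j, b j - c i p) (fun i => b i - c i p))
      have hB' : Bornology.IsBounded ((fun w : W => (w : E) + p) ''
          (C ⁻¹' (Set.Icc (fun i => b i - t - ∑ j, b j - c i p) (fun i => b i - c i p)))) := by
        refine LipschitzWith.isBounded_image (K := 1) ?_ hB
        exact LipschitzWith.of_dist_le_mul fun u v => by simp [Subtype.dist_eq]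
      refine hB'.subset ?_
      rintro z ⟨hz, hzt⟩
      refine ⟨⟨z - p, hz.1⟩, ?_, by simp⟩
      have hC : ∀ i, C ⟨z - p, hz.1⟩ i = c i z - c i p := fun i => map_sub (c i) z p
      refine ⟨fun i => ?_, fun i => ?_⟩
      · rw [hC]
        have h1 : b i - c i z ≤ ∑ j, (b j - c j z) :=
          Finset.single_le_sum (f := fun j => b j - c j z)
            (fun j _ => sub_nonneg.2 (hz.2 j)) (Finset.mem_univ i)
        rw [Finset.sum_sub_distrib] at h1
        simp only [LinearMap.neg_apply, LinearMap.sum_apply] at hzt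
        linarith
      · rw [hC]
        have := hz.2 i
        linarith
    refine ⟨_, ?_, hsub⟩
    by_contra! hcon
    exact hb ((hsub ((-∑ i, c i) x)).subset fun z hz => ⟨hz, (hcon z hz x hx).le⟩)

/-! ### Sweeping by a linear functional -/

section Functional

variable {l : E →ₗ[ℝ] ℝ}

theorem isCompact_sublevel
    (hl : ∀ t, Bornology.IsBounded {x ∈ poly c b W p | l x ≤ t}) (t : ℝ) :
    IsCompact {x ∈ poly c b W p | l x ≤ t} := by
  refine Metric.isCompact_of_isClosed_isBounded ?_ (hl t)
  exact isClosed_poly.inter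
    (isClosed_le (LinearMap.continuous_of_finiteDimensional l) continuous_const)

theorem exists_min (hl : ∀ t, Bornology.IsBounded {x ∈ poly c b W p | l x ≤ t})
    (hne : (poly c b W p).Nonempty) :
    ∃ q ∈ poly c b W p, ∀ x ∈ poly c b W p, l q ≤ l x := by
  obtain ⟨x₀, hx₀⟩ := hne
  obtain ⟨q, hq, hmin⟩ := (isCompact_sublevel hl (l x₀)).exists_isMinOn ⟨x₀, hx₀, le_rfl⟩
    (LinearMap.continuous_of_finiteDimensional l).continuousOn
  refine ⟨q, hq.1, fun x hx => ?_⟩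
  rcases le_total (l x) (l x₀) with h | h
  · exact hmin ⟨hx, h⟩
  · exact hq.2.trans h

/-- Every nonempty `l(P)` is `[a, b]` or `[a, ∞)`, because `P` has compact sublevel sets. -/
theorem hasEuler_image_poly
    (hl : ∀ t, Bornology.IsBounded {x ∈ poly c b W p | l x ≤ t})
    (hne : (poly c b W p).Nonempty) :
    HasEuler (ind (l '' poly c b W p)) 1 := by
  obtain ⟨q, hq, hmin⟩ := exists_min hl hne
  have hoc := ordConnected_image (convex_poly (c := c) (b := b) (W := W) (p := p)) l
  by_cases hb : BddAbove (l '' poly c b W p)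
  · obtain ⟨B, hB⟩ := hb
    have hB' : ∀ x ∈ poly c b W p, l x ≤ B := fun x hx => hB ⟨x, hx, rfl⟩
    obtain ⟨r, hr, hmax⟩ := (isCompact_sublevel hl B).exists_isMaxOn ⟨q, hq, hB' q hq⟩
      (LinearMap.continuous_of_finiteDimensional l).continuousOn
    have : l '' poly c b W p = Set.Icc (l q) (l r) := by
      refine Set.Subset.antisymm ?_ (hoc.out ⟨q, hq, rfl⟩ ⟨r, hr.1, rfl⟩)
      rintro _ ⟨x, hx, rfl⟩
      exact ⟨hmin x hx, hmax ⟨hx, hB' x hx⟩⟩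
    rw [this]
    exact hasEuler_Icc (hmin r hr.1)
  · have : l '' poly c b W p = Set.Ici (l q) := by
      refine Set.Subset.antisymm ?_ fun t ht => ?_
      · rintro _ ⟨x, hx, rfl⟩
        exact hmin x hx
      · obtain ⟨y, hy, hty⟩ := not_bddAbove_iff.1 hb t
        exact hoc.out ⟨q, hq, rfl⟩ hy ⟨ht, hty.le⟩
    rw [this]
    exact hasEuler_Ici _

open Classical in
/-- The image `l(U_J)` of a cell is a point if `l` is constant on the face, and otherwise an open
interval, with finite right end exactly when the cell is bounded. Slicing by `l` lowers the
dimension of the face by one in the second case only, so the slice sign times the Euler number of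
`l(U_J)` is `(-1) ^ dim` for bounded cells and `0` for unbounded ones. -/
theorem hasEuler_image_cell
    (hl : ∀ t, Bornology.IsBounded {x ∈ poly c b W p | l x ≤ t})
    (J : Finset ι) : ∃ k, HasEuler (ind (l '' cell c b W p J)) k ∧
      (-1) ^ Module.finrank ℝ (dirs c (W ⊓ l.ker) J) * k =
        if (cell c b W p J).Nonempty ∧ Bornology.IsBounded (cell c b W p J) then
          (-1) ^ Module.finrank ℝ (dirs c W J) else 0 := by
  rcases (cell c b W p J).eq_empty_or_nonempty with he | hne
  · refine ⟨0, ?_, by simp [he]⟩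
    rw [he, Set.image_empty]
    exact hasEuler_empty
  rw [dirs_inf]
  obtain ⟨q, hq, hmin⟩ := exists_min hl (hne.mono fun _ h => h.1)
  have hbb : BddBelow (l '' cell c b W p J) := by
    refine ⟨l q, ?_⟩
    rintro _ ⟨x, hx, rfl⟩
    exact hmin x hx.1
  have hiff : Bornology.IsBounded (cell c b W p J) ↔ BddAbove (l '' cell c b W p J) := by
    constructor
    · intro h
      have := (l.toContinuousLinearMap.lipschitz.isBounded_image h)
      exact this.bddAbove
    · rintro ⟨B, hB⟩
      exact (hl B).subset fun x hx => ⟨hx.1, hB ⟨x, hx, rfl⟩⟩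
  simp only [hne, true_and, hiff]
  by_cases hD : dirs c W J ≤ l.ker
  · obtain ⟨x, hx⟩ := hne
    have himg : l '' cell c b W p J = {l x} := by
      refine Set.Subset.antisymm ?_ (by rintro _ rfl; exact ⟨x, hx, rfl⟩)
      rintro _ ⟨y, hy, rfl⟩
      have := hD (sub_mem_dirs (cell_subset_face hx) (cell_subset_face hy))
      rw [LinearMap.mem_ker, map_sub, sub_eq_zero] at this
      exact this
    rw [himg]
    refine ⟨1, hasEuler_singleton _, ?_⟩
    rw [inf_eq_left.2 hD]
    simp
  · have hopen : IsOpen (l '' cell c b W p J) := by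
      rw [isOpen_iff_mem_nhds]
      rintro _ ⟨x, hx, rfl⟩
      obtain ⟨v, hv, hlv⟩ := Set.not_subset.1 hD
      have hlv : l v ≠ 0 := hlv
      have ht : Tendsto (fun t => (t - l x) / l v) (𝓝 (l x)) (𝓝 ((l x - l x) / l v)) :=
        Continuous.tendsto (by fun_prop) (l x)
      rw [sub_self, zero_div] at ht
      filter_upwards [ht.eventually (cell_eventually hx hv)] with t htm
      refine ⟨_, htm, ?_⟩
      simp only [map_add, map_smul, smul_eq_mul]
      field_simp
      ring
    refine ⟨_, hasEuler_open hopen (ordConnected_image convex_cell l) (hne.image l) hbb, ?_⟩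
    rw [← finrank_inf_ker hD]
    split_ifs <;> simp [pow_succ]

end Functional

/-- A hyperplane slice of a polyhedron is a polyhedron with the same inequalities. -/
theorem poly_slice {l : E →ₗ[ℝ] ℝ} {q : E} (hq : q ∈ poly c b W p) :
    poly c b (W ⊓ l.ker) q = {x ∈ poly c b W p | l x = l q} := by
  ext x
  have : x - q ∈ W ↔ x - p ∈ W := by
    have : x - q = (x - p) - (q - p) := by abel
    rw [this, W.sub_mem_iff_left hq.1]
  simp only [poly, Submodule.mem_inf, LinearMap.mem_ker, map_sub, sub_eq_zero, Set.mem_ofPred_eq,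
    this]
  tauto

open Classical in
/-- The alternating sum over the bounded cells of a nonempty line-free polyhedron is `1`, by
induction on `dim W`: the induction hypothesis evaluates the sum over each slice `l = t`, and the
Euler functional in `t` is then applied to both sides. -/
theorem euler_poly (d : ℕ) : ∀ (W : Submodule ℝ E) (p : E), Module.finrank ℝ W = d →
    (poly c b W p).Nonempty → (∀ v ∈ W, (∀ i, c i v = 0) → v = 0) →
    ∑ J : Finset ι, (if (cell c b W p J).Nonempty ∧ Bornology.IsBounded (cell c b W p J) then
          (-1 : ℤ) ^ Module.finrank ℝ (dirs c W J) else 0) = 1 := by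
  induction d using Nat.strong_induction_on with
  | _ d ih =>
  intro W p hd hne hp
  by_cases hsub : (poly c b W p).Subsingleton
  · obtain ⟨x, hx⟩ := hne
    have hxc : x ∈ cell c b W p (act c b x) := ⟨hx, rfl⟩
    rw [Finset.sum_eq_single (act c b x)]
    · have hD : dirs c W (act c b x) = ⊥ := by
        rw [eq_bot_iff]
        intro v hv
        obtain ⟨s, hs, hs0⟩ := (((cell_eventually hxc hv).filter_mono
          nhdsWithin_le_nhds).and (self_mem_nhdsWithin (s := Set.Ioi (0 : ℝ)))).exists
        have := hsub hs.1 hx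
        rw [add_eq_left, smul_eq_zero] at this
        exact this.resolve_left (ne_of_gt hs0)
      rw [if_pos, hD]
      · simp
      · exact ⟨⟨x, hxc⟩, (hsub.anti fun _ h => h.1).finite.isBounded⟩
    · intro J _ hJ
      rw [if_neg]
      rintro ⟨⟨y, hy⟩, -⟩
      exact hJ (by rw [← hy.2, hsub hy.1 hx])
    · simp
  · rw [Set.not_subsingleton_iff] at hsub
    obtain ⟨x, hx, y, hy, hxy⟩ := hsub
    obtain ⟨l, ⟨x', hx', y', hy', hne'⟩, hl⟩ := exists_functional hp hx hy hxy
    have hW : ¬ W ≤ l.ker := by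
      intro h
      have hm : x' - y' ∈ W := by simpa using W.sub_mem hx'.1 hy'.1
      have := h hm
      rw [LinearMap.mem_ker, map_sub, sub_eq_zero] at this
      exact hne' this
    choose k hk hsign using fun J => hasEuler_image_cell hl J
    simp only [← hsign]
    -- It remains to see that the slice sums add up to the indicator of `l(P)`, for each `t`.
    refine (HasEuler.sum _ hk).unique ?_
    convert hasEuler_image_poly hl hne using 1
    funext t
    by_cases ht : t ∈ l '' poly c b W p
    · obtain ⟨q, hq, rfl⟩ := ht
      have hs := ih _ (by have := finrank_inf_ker hW; omega) (W ⊓ l.ker) q rfl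
        ⟨q, by simp [poly_slice hq, hq]⟩ (fun v hv => hp v hv.1)
      have h1 : ind (l '' poly c b W p) (l q) = 1 := if_pos ⟨q, hq, rfl⟩
      rw [h1]
      refine (Finset.sum_congr rfl fun J _ => ?_).trans hs
      have hcell : cell c b (W ⊓ l.ker) q J = {x ∈ cell c b W p J | l x = l q} := by
        ext z
        simp only [cell, poly_slice hq, Set.mem_ofPred_eq]
        tauto
      have hbd : Bornology.IsBounded (cell c b (W ⊓ l.ker) q J) := by
        rw [hcell]
        exact (hl (l q)).subset fun z hz => ⟨hz.1.1, hz.2.le⟩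
      have hiff : (cell c b (W ⊓ l.ker) q J).Nonempty ↔ l q ∈ l '' cell c b W p J := by
        rw [hcell]; rfl
      simp only [hbd, and_true, hiff, ind, mul_ite, mul_one, mul_zero]
    · have h0 : ind (l '' poly c b W p) t = 0 := if_neg ht
      rw [h0]
      refine Finset.sum_eq_zero fun J _ => ?_
      have : ind (l '' cell c b W p J) t = 0 :=
        if_neg fun h => ht (Set.image_mono (fun _ h => h.1) h)
      rw [this, mul_zero]

/-! ### Faces as convex extreme subsets -/

theorem face_isBounded_iff (hne : (cell c b W p J).Nonempty) :
    Bornology.IsBounded (face c b W p J) ↔ Bornology.IsBounded (cell c b W p J) := by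
  refine ⟨fun h => h.subset cell_subset_face, fun h => ?_⟩
  obtain ⟨x, hx⟩ := hne
  have hL : LipschitzWith 2 (fun z : E => (2 : ℝ) • z - x) :=
    LipschitzWith.of_dist_le_mul fun u v => by simp [dist_smul₀]
  refine (hL.isBounded_image h).subset fun y hy => ?_
  refine ⟨_, combo_mem_cell hx hy (by norm_num : (0 : ℝ) < 1 / 2)
    (by norm_num : (0 : ℝ) < 1 / 2) (by norm_num), ?_⟩
  simp only [smul_add, smul_smul]
  norm_num

theorem face_injOn : Set.InjOn (face c b W p) {J | (cell c b W p J).Nonempty} := by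
  rintro J ⟨x, hx⟩ K ⟨y, hy⟩ h
  have hx' : x ∈ face c b W p K := h ▸ cell_subset_face hx
  have hy' : y ∈ face c b W p J := h ▸ cell_subset_face hy
  exact Finset.Subset.antisymm (hy.2 ▸ hy'.2) (hx.2 ▸ hx'.2)

theorem convex_face : Convex ℝ (face c b W p J) := by
  rw [convex_iff_forall_pos]
  exact fun x hx y hy α β hα hβ h => ⟨combo_mem_poly hx.1 hy.1 hα.le hβ.le h,
    fun i hi => (act_combo hx.1 hy.1 hα hβ h).2 ⟨hx.2 hi, hy.2 hi⟩⟩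

theorem isExtreme_face : IsExtreme ℝ (poly c b W p) (face c b W p J) := by
  refine ⟨fun _ h => h.1, ?_⟩
  rintro x hx y hy z hz ⟨α, β, hα, hβ, h, rfl⟩
  exact ⟨hx, fun i hi => ((act_combo hx hy hα hβ h).1 (hz.2 hi)).1⟩

/-- Every nonempty convex extreme subset `F` is one of the faces `face c b W p J`: take `J` to be
the smallest active set of a point `x` of `F`. -/
theorem exists_eq_face {F : Set E} (hne : F.Nonempty) (hc : Convex ℝ F)
    (hF : IsExtreme ℝ (poly c b W p) F) :
    ∃ J, (cell c b W p J).Nonempty ∧ face c b W p J = F := by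
  classical
  obtain ⟨x, hx, hmin⟩ : ∃ x ∈ F, ∀ y ∈ F, (act c b x).card ≤ (act c b y).card := by
    obtain ⟨x, hx⟩ := WellFounded.has_min (measure fun y : E => (act c b y).card).wf F hne
    exact ⟨x, hx.1, fun y hy => not_lt.1 (hx.2 y hy)⟩
  have hxP := hF.subset hx
  have hxc : x ∈ cell c b W p (act c b x) := ⟨hxP, rfl⟩
  refine ⟨act c b x, ⟨x, hxc⟩, Set.Subset.antisymm (fun y hy => ?_) fun y hy => ?_⟩
  -- The segment from `y` to `x` can be prolonged beyond `x` inside `P`.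
  · obtain ⟨s, hs, hs0⟩ := (((cell_eventually hxc
      (sub_mem_dirs hy (cell_subset_face hxc))).filter_mono
      nhdsWithin_le_nhds).and (self_mem_nhdsWithin (s := Set.Ioi (0 : ℝ)))).exists
    have hs0 : 0 < s := hs0
    refine hF.left_mem_of_mem_openSegment hy.1 hs.1 hx
      ⟨s / (1 + s), 1 / (1 + s), by positivity, by positivity, by field_simp; ring, ?_⟩
    have h1 : (1 + s) ≠ 0 := by positivity
    rw [← smul_right_inj h1]
    simp only [smul_add (1 + s), smul_smul (1 + s), mul_div_cancel₀ _ h1, one_smul, add_smul,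
      smul_sub]
    abel
  · refine ⟨hF.subset hy, ?_⟩
    have hh : (0 : ℝ) < 1 / 2 := by norm_num
    have hh' : (1 / 2 : ℝ) + 1 / 2 = 1 := by norm_num
    -- The active set of the midpoint is contained in those of `x` and `y`, hence equal to that of `x`.
    have hm := hmin _ (hc hx hy hh.le hh.le hh')
    have hsub : act c b ((1 / 2 : ℝ) • x + (1 / 2 : ℝ) • y) ⊆ act c b x := fun i hi =>
      ((act_combo hxP (hF.subset hy) hh hh hh').1 hi).1
    rw [← Finset.eq_of_subset_of_card_le hsub hm]
    exact fun i hi => ((act_combo hxP (hF.subset hy) hh hh hh').1 hi).2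

theorem direction_face (hne : (cell c b W p J).Nonempty) :
    (affineSpan ℝ (face c b W p J)).direction = dirs c W J := by
  rw [direction_affineSpan]
  apply le_antisymm
  · rw [vectorSpan_def, Submodule.span_le]
    rintro _ ⟨y, hy, x, hx, rfl⟩
    exact sub_mem_dirs hx hy
  · intro v hv
    obtain ⟨x, hx⟩ := hne
    obtain ⟨s, hs, hs0⟩ := (((cell_eventually hx hv).filter_mono
      nhdsWithin_le_nhds).and (self_mem_nhdsWithin (s := Set.Ioi (0 : ℝ)))).exists
    have := vsub_mem_vectorSpan ℝ (cell_subset_face hs) (cell_subset_face hx)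
    rw [vsub_eq_sub, add_sub_cancel_left] at this
    exact (Submodule.smul_mem_iff _ (ne_of_gt hs0)).1 this

end Poly

end BoundedFaces

open BoundedFaces

/-- Lemma 4.6 of Scarf–Woods. Let `P ⊆ ℝ^n` be a nonempty unbounded
polyhedron (intersection of finitely many closed halfspaces) containing no line. Then
the alternating sum `Σ_F (−1)^{dim F}` over the nonempty bounded faces `F` of `P`
(convex extreme subsets of `P`), with `dim F` the dimension of the affine hull of `F`,
equals `1`. -/
theorem statement8 {n : ℕ} (P : Set (Fin n → ℝ))
    (hpoly : ∃ (m : ℕ) (c : Fin m → (Fin n → ℝ)) (b : Fin m → ℝ),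
      P = {x : Fin n → ℝ | ∀ i, ∑ j, c i j * x j ≤ b i})
    (hne : P.Nonempty)
    (hunb : ¬ Bornology.IsBounded P)
    (hline : ¬ ∃ (x v : Fin n → ℝ), v ≠ 0 ∧ ∀ t : ℝ, x + t • v ∈ P) :
    (∑ᶠ F ∈ {F : Set (Fin n → ℝ) |
        F.Nonempty ∧ Convex ℝ F ∧ IsExtreme ℝ P F ∧ Bornology.IsBounded F},
      (-1 : ℤ) ^ (Module.finrank ℝ (affineSpan ℝ F).direction)) = 1 := by
  classical
  obtain ⟨m, a, b, hP⟩ := hpoly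
  let c : Fin m → (Fin n → ℝ) →ₗ[ℝ] ℝ := fun i => dotProductBilin ℝ ℝ (a i)
  have hP' : P = poly c b ⊤ 0 := by
    rw [hP]; ext x; simp [poly, c, dotProduct]
  subst hP'
  have hp : ∀ v ∈ (⊤ : Submodule ℝ (Fin n → ℝ)), (∀ i, c i v = 0) → v = 0 := by
    intro v _ hv
    by_contra hv0
    obtain ⟨x, hx⟩ := hne
    exact hline ⟨x, v, hv0, fun t => ⟨Submodule.mem_top, fun i => by simpa [hv i] using hx.2 i⟩⟩
  have key := euler_poly (c := c) (b := b) _ ⊤ 0 rfl hne hp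
  rw [← Finset.sum_filter, ← finsum_mem_coe_finset] at key
  refine Eq.trans (Eq.symm ?_) key
  refine finsum_mem_eq_of_bijOn (face c b ⊤ 0) ⟨?_, ?_, ?_⟩ ?_
  · intro J hJ
    simp only [Finset.coe_filter, Finset.mem_univ, true_and, Set.mem_ofPred_eq] at hJ
    exact ⟨hJ.1.mono cell_subset_face, convex_face, isExtreme_face,
      (face_isBounded_iff hJ.1).2 hJ.2⟩
  · refine face_injOn.mono fun J hJ => ?_
    simp only [Finset.coe_filter, Finset.mem_univ, true_and, Set.mem_ofPred_eq] at hJ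
    exact hJ.1
  · rintro F ⟨h1, h2, h3, h4⟩
    obtain ⟨J, hJ, rfl⟩ := exists_eq_face h1 h2 h3
    exact ⟨J, by simpa using ⟨hJ, (face_isBounded_iff hJ).1 h4⟩, rfl⟩
  · intro J hJ
    simp only [Finset.coe_filter, Finset.mem_univ, true_and, Set.mem_ofPred_eq] at hJ
    rw [direction_face hJ.1]
end

section
/- Let a_1 and a_2 be positive integers and let G = {μ_1 a_1 + μ_2 a_2 : μ_1, μ_2 ∈ ℤ_{≥0}}. Then for every integer b ≥ 0, #{(μ_1, μ_2) ∈ ℤ^2_{≥0} : μ_1 a_1 + μ_2 a_2 = b} − #{(μ_1, μ_2) ∈ ℤ^2_{≥0} : μ_1 a_1 + μ_2 a_2 = b − lcm(a_1, a_2)} equals 1 if b ∈ G and 0 otherwise (this is exactly the statement that Σ_{b∈G} z^b = (1 − z^{lcm(a_1,a_2)}) / ((1 − z^{a_1})(1 − z^{a_2})), coefficientwise as power series). -/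
/-!
Write `lcm(a₁, a₂) = k * a₁ = m * a₂`. The shift `(x, y) ↦ (x + k, y)` is a bijection from the
representations of `b - lcm(a₁, a₂)` onto the representations of `b` with `k ≤ x`, so the difference
of the two counts is the number of representations of `b` with `x < k`. There is at most one of
these (`repr_unique`), because `x * a₁` is determined modulo `a₂`, hence `x` modulo `k`; and there
is one whenever `b` is representable (`exists_reduced_repr`), by trading each block of `k` copies
of `a₁` for `m` copies of `a₂`.
-/

open scoped Classical

theorem repr_unique {a₁ a₂ k : ℕ} (h₁ : 0 < a₁) (h₂ : 0 < a₂) (hk : Nat.lcm a₁ a₂ = a₁ * k)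
    {x y x' y' : ℕ} (h : x * a₁ + y * a₂ = x' * a₁ + y' * a₂) (hx : x < k) (hx' : x' < k) :
    x = x' ∧ y = y' := by
  have hd₂ : (a₂ : ℤ) ∣ a₁ * ((x : ℤ) - x') := by
    refine ⟨(y' : ℤ) - y, ?_⟩
    have h' : (x : ℤ) * a₁ + y * a₂ = x' * a₁ + y' * a₂ := by exact_mod_cast h
    linear_combination h'
  have hd : ((Nat.lcm a₁ a₂ : ℕ) : ℤ) ∣ a₁ * ((x : ℤ) - x') := by
    rw [Int.natCast_dvd] at hd₂ ⊢
    exact Nat.lcm_dvd (Int.natCast_dvd.mp (Dvd.intro _ rfl)) hd₂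
  have hkd : (k : ℤ) ∣ (x : ℤ) - x' := by
    rw [hk, Nat.cast_mul] at hd
    exact Int.dvd_of_mul_dvd_mul_left (by exact_mod_cast h₁.ne') hd
  have h0 : (x : ℤ) - x' = 0 :=
    Int.eq_zero_of_abs_lt_dvd hkd (by rw [abs_lt]; constructor <;> omega)
  have hxx : x = x' := by omega
  subst hxx
  exact ⟨rfl, Nat.eq_of_mul_eq_mul_right h₂ (Nat.add_left_cancel h)⟩

theorem exists_reduced_repr {a₁ a₂ k m : ℕ} (hk0 : 0 < k) (hkm : a₁ * k = a₂ * m) (x y : ℕ) :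
    ∃ r s : ℕ, r < k ∧ r * a₁ + s * a₂ = x * a₁ + y * a₂ := by
  refine ⟨x % k, y + x / k * m, Nat.mod_lt _ hk0, ?_⟩
  have hx := Nat.mod_add_div x k
  calc x % k * a₁ + (y + x / k * m) * a₂
      = x % k * a₁ + y * a₂ + x / k * (a₂ * m) := by ring
    _ = (x % k + k * (x / k)) * a₁ + y * a₂ := by rw [← hkm]; ring
    _ = x * a₁ + y * a₂ := by rw [hx]

/-- Example 2.2 of Scarf–Woods. For positive integers `a₁, a₂`
and the semigroup `G` they generate, and every integer `b ≥ 0`: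
`#{(μ₁,μ₂) ≥ 0 : μ₁a₁ + μ₂a₂ = b} − #{(μ₁,μ₂) ≥ 0 : μ₁a₁ + μ₂a₂ = b − lcm(a₁,a₂)}`
is `1` if `b ∈ G` and `0` otherwise; i.e. coefficientwise,
`Σ_{b ∈ G} z^b = (1 − z^{lcm(a₁,a₂)}) / ((1 − z^{a₁})(1 − z^{a₂}))`. -/
theorem statement15 (a₁ a₂ : ℕ) (h₁ : 0 < a₁) (h₂ : 0 < a₂) (b : ℕ) :
    (Set.ncard {p : ℕ × ℕ | p.1 * a₁ + p.2 * a₂ = b} : ℤ) -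
        (Set.ncard {p : ℕ × ℕ |
          ((p.1 * a₁ + p.2 * a₂ : ℕ) : ℤ) = (b : ℤ) - (Nat.lcm a₁ a₂ : ℤ)} : ℤ) =
      if ∃ μ₁ μ₂ : ℕ, μ₁ * a₁ + μ₂ * a₂ = b then 1 else 0 := by
  obtain ⟨k, hk⟩ := Nat.dvd_lcm_left a₁ a₂
  obtain ⟨m, hm⟩ := Nat.dvd_lcm_right a₁ a₂
  have hk0 : 0 < k := by
    have := Nat.lcm_pos h₁ h₂
    rw [hk] at this
    exact Nat.pos_of_mul_pos_left this
  set S : Set (ℕ × ℕ) := {p | p.1 * a₁ + p.2 * a₂ = b} with hS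
  set T : Set (ℕ × ℕ) := {p |
    ((p.1 * a₁ + p.2 * a₂ : ℕ) : ℤ) = (b : ℤ) - (Nat.lcm a₁ a₂ : ℤ)} with hT
  set U : Set (ℕ × ℕ) := {p | p.1 * a₁ + p.2 * a₂ = b ∧ p.1 < k} with hU
  have hSfin : S.Finite := by
    refine ((Set.finite_Iic b).prod (Set.finite_Iic b)).subset ?_
    rintro ⟨x, y⟩ hp
    simp only [hS, Set.mem_ofPred_eq] at hp
    simp only [Set.mem_prod, Set.mem_Iic]
    constructor <;> nlinarith [Nat.zero_le (x * a₁), Nat.zero_le (y * a₂)]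
  let f : ℕ × ℕ → ℕ × ℕ := fun p => (p.1 + k, p.2)
  have hf : Function.Injective f := by
    rintro ⟨x, y⟩ ⟨x', y'⟩ h
    simpa [f] using h
  have hSU : S = f '' T ∪ U := by
    ext ⟨x, y⟩
    simp only [hS, hT, hU, hk, f, Set.mem_union, Set.mem_image, Set.mem_ofPred_eq, Prod.exists,
      Prod.mk.injEq]
    constructor
    · intro h
      rcases lt_or_ge x k with hx | hx
      · exact Or.inr ⟨h, hx⟩
      · obtain ⟨z, rfl⟩ := Nat.exists_eq_add_of_le' hx
        refine Or.inl ⟨z, y, ?_, rfl, rfl⟩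
        rw [← h]
        push_cast
        ring
    · rintro (⟨z, w, h, rfl, rfl⟩ | ⟨h, -⟩)
      · zify
        push_cast at h
        linear_combination h
      · exact h
  have hdisj : Disjoint (f '' T) U := by
    rw [Set.disjoint_left]
    rintro _ ⟨p, -, rfl⟩ ⟨-, h⟩
    simp only [f] at h
    omega
  have hcard : S.ncard = T.ncard + U.ncard := by
    have hfin := hSU ▸ hSfin
    rw [hSU, Set.ncard_union_eq hdisj (hfin.subset Set.subset_union_left)
      (hfin.subset Set.subset_union_right), Set.ncard_image_of_injective _ hf]
  rw [hcard]
  split_ifs with hb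
  · obtain ⟨x, y, hxy⟩ := hb
    obtain ⟨r, s, hr, hrs⟩ := exists_reduced_repr hk0 (hk.symm.trans hm) x y
    have hU1 : U = {(r, s)} := by
      ext ⟨x', y'⟩
      simp only [hU, Set.mem_ofPred_eq, Set.mem_singleton_iff, Prod.mk.injEq]
      constructor
      · rintro ⟨h, hx'⟩
        exact repr_unique h₁ h₂ hk (h.trans (hrs.trans hxy).symm) hx' hr
      · rintro ⟨rfl, rfl⟩
        exact ⟨hrs.trans hxy, hr⟩
    rw [hU1, Set.ncard_singleton]
    push_cast
    ring
  · have hU0 : U = ∅ := by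
      rw [Set.eq_empty_iff_forall_notMem]
      rintro ⟨x, y⟩ ⟨h, -⟩
      exact hb ⟨x, y, h⟩
    rw [hU0, Set.ncard_empty]
    push_cast
    ring
end

section
/- Let A be a d×(d+1) integer matrix with columns a_1,…,a_{d+1} ∈ ℤ^d whose ℝ-span is all of ℝ^d, and suppose there exists l ∈ ℝ^d with ⟨l, a_i⟩ < 0 for all i. Then Λ = {λ ∈ ℤ^{d+1} : Aλ = 0} is a rank-one lattice; let λ be a generator of Λ and let a = A·max({λ, 0}) ∈ ℤ^d (the image under A of the positive part of λ). Then for every b ∈ ℤ^d, #{ν ∈ ℤ^{d+1}_{≥0} : Aν = b} − #{ν ∈ ℤ^{d+1}_{≥0} : Aν = b − a} equals 1 if b ∈ G and 0 otherwise (this is exactly the statement that Σ_{b∈G} z^b = (1 − z^a) / Π_i (1 − z^{a_i}), coefficientwise as Laurent series). -/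
open scoped Classical

/-!
The real kernel of `A` is a line by rank-nullity, so some coordinate is nonzero on it, and
projecting to that coordinate embeds `Λ` into `ℤ`; hence `Λ` is cyclic (`exists_generator`).

For the counting, let `F b` be the fiber `{ν ≥ 0 : A ν = b}`, which is finite because `l` bounds
its coordinates (`fiber_finite`). Translation by the positive part `λ⁺` of `λ` maps `F (b - a)`
bijectively onto the `ν ∈ F b` with `ν ≥ λ⁺`, equivalently those with `ν - λ ∈ F b`. Two points of
`F b` differ by a multiple of `λ`, so `F b` is a finite run `ν₀, ν₀ + λ, …, ν₀ + kλ`, and when it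
is nonempty exactly one of its points, the first, is not in the image of the translation.
-/

lemma exists_generator {d : ℕ} (A : Matrix (Fin d) (Fin (d + 1)) ℤ)
    (hspan : Submodule.span ℝ
      (Set.range fun j : Fin (d + 1) => fun i : Fin d => (A i j : ℝ)) = ⊤) :
    ∃ lam₀ : Fin (d + 1) → ℤ, lam₀ ≠ 0 ∧ A.mulVec lam₀ = 0 ∧
        ∀ μ : Fin (d + 1) → ℤ, A.mulVec μ = 0 → ∃ k : ℤ, μ = k • lam₀ := by
  let B : Matrix (Fin d) (Fin (d + 1)) ℝ := A.map (Int.cast)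
  have hrange : LinearMap.range B.mulVecLin = ⊤ := by
    rw [Matrix.range_mulVecLin]; exact hspan
  have hker : Module.finrank ℝ (LinearMap.ker B.mulVecLin) = 1 := by
    have h := LinearMap.finrank_range_add_finrank_ker B.mulVecLin
    rw [hrange, finrank_top] at h
    simp only [Module.finrank_fin_fun] at h
    omega
  obtain ⟨v, hv0, hv⟩ := finrank_eq_one_iff'.1 hker
  obtain ⟨i, hi⟩ : ∃ i, (v : Fin (d + 1) → ℝ) i ≠ 0 := by
    by_contra! h
    exact hv0 (Subtype.ext (funext h))
  have hinj : ∀ μ : Fin (d + 1) → ℤ, A.mulVec μ = 0 → μ i = 0 → μ = 0 := by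
    intro μ hμ hμi
    have hm : (fun j => (μ j : ℝ)) ∈ LinearMap.ker B.mulVecLin := by
      rw [LinearMap.mem_ker, Matrix.mulVecLin_apply]
      ext r
      have := congrFun hμ r
      simp only [Matrix.mulVec, dotProduct, Pi.zero_apply] at this
      simp only [Matrix.mulVec, dotProduct, Pi.zero_apply, B, Matrix.map_apply]
      exact_mod_cast this
    obtain ⟨c, hc⟩ := hv ⟨_, hm⟩
    have hc' : ∀ j, c * (v : Fin (d + 1) → ℝ) j = μ j := fun j =>
      congrFun (congrArg Subtype.val hc) j
    have hc0 : c = 0 := by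
      have := hc' i
      rw [hμi, Int.cast_zero] at this
      exact (mul_eq_zero.1 this).resolve_right hi
    ext j
    have := hc' j
    rw [hc0, zero_mul] at this
    exact_mod_cast this.symm
  obtain ⟨w, hw, hw0⟩ : ∃ w : Fin (d + 1) → ℤ, A.mulVec w = 0 ∧ w ≠ 0 := by
    by_contra! h
    have hi : Function.Injective A.mulVecLin :=
      (injective_iff_map_eq_zero _).2 fun x hx => h x (by simpa using hx)
    have := LinearMap.finrank_le_finrank_of_injective hi
    simp only [Module.finrank_fin_fun] at this
    omega
  let I : Ideal ℤ := (LinearMap.ker A.mulVecLin).map (LinearMap.proj i)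
  obtain ⟨g, hg⟩ := (IsPrincipalIdealRing.principal I).principal
  have hgI : g ∈ I := by rw [hg]; exact Submodule.mem_span_singleton_self g
  obtain ⟨lam, hlam, hlg⟩ := hgI
  have hlam' : A.mulVec lam = 0 := by simpa using hlam
  have hgen : ∀ μ : Fin (d + 1) → ℤ, A.mulVec μ = 0 → ∃ k : ℤ, μ = k • lam := by
    intro μ hμ
    have hμI : μ i ∈ I := ⟨μ, by simpa using hμ, rfl⟩
    rw [hg] at hμI
    obtain ⟨k, hk⟩ := Submodule.mem_span_singleton.1 hμI
    refine ⟨k, sub_eq_zero.1 (hinj _ ?_ ?_)⟩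
    · rw [Matrix.mulVec_sub, Matrix.mulVec_smul, hμ, hlam']; simp
    · have : lam i = g := hlg
      simp only [Pi.sub_apply, Pi.smul_apply, this, hk, sub_self]
  refine ⟨lam, ?_, hlam', hgen⟩
  rintro rfl
  obtain ⟨k, hk⟩ := hgen w hw
  exact hw0 (by simpa using hk)

lemma fiber_finite {d : ℕ} (A : Matrix (Fin d) (Fin (d + 1)) ℤ)
    (l : Fin d → ℝ) (hl : ∀ j : Fin (d + 1), (∑ i, l i * (A i j : ℝ)) < 0) (b : Fin d → ℤ) :
    {ν : Fin (d + 1) → ℤ | 0 ≤ ν ∧ A.mulVec ν = b}.Finite := by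
  refine (Set.finite_Icc (0 : Fin (d + 1) → ℤ)
    (fun j => ⌊(∑ i, l i * (b i : ℝ)) / (∑ i, l i * (A i j : ℝ))⌋)).subset ?_
  rintro ν ⟨h0, hb⟩
  refine ⟨h0, fun j => ?_⟩
  rw [Int.le_floor, le_div_iff_of_neg (hl j)]
  have key : ∑ i, l i * (b i : ℝ) = ∑ j, (ν j : ℝ) * ∑ i, l i * (A i j : ℝ) := by
    simp only [← hb, Matrix.mulVec, dotProduct, Int.cast_sum, Int.cast_mul, Finset.mul_sum]
    rw [Finset.sum_comm]
    refine Finset.sum_congr rfl fun _ _ => Finset.sum_congr rfl fun _ _ => by ring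
  rw [key, ← Finset.add_sum_erase _ _ (Finset.mem_univ j)]
  have : ∑ k ∈ Finset.univ.erase j, (ν k : ℝ) * ∑ i, l i * (A i k : ℝ) ≤ 0 :=
    Finset.sum_nonpos fun k _ =>
      mul_nonpos_of_nonneg_of_nonpos (by exact_mod_cast h0 k) (hl k).le
  linarith

/-- Since `lam ≠ 0`, subtracting it repeatedly must eventually leave a finite set; applied to a
fiber, this gives its first point. -/
lemma exists_first {n : ℕ} (F : Set (Fin n → ℤ)) (hF : F.Finite) (hne : F.Nonempty)
    (lam : Fin n → ℤ) (h0 : lam ≠ 0) : ∃ ν ∈ F, ν - lam ∉ F := by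
  by_contra! h
  obtain ⟨ν, hν⟩ := hne
  have hall : ∀ m : ℕ, ν - m • lam ∈ F := by
    intro m
    induction m with
    | zero => simpa using hν
    | succ m ih =>
      have := h _ ih
      rwa [sub_sub, ← succ_nsmul] at this
  refine Set.infinite_of_injective_forall_mem (f := fun m : ℕ => ν - m • lam) ?_ hall hF
  intro a b hab
  obtain ⟨i, hi⟩ := Function.ne_iff.1 h0
  have := congrFun hab i
  simp only [Pi.sub_apply, Pi.smul_apply, sub_right_inj] at this
  rw [nsmul_eq_mul, nsmul_eq_mul] at this
  exact_mod_cast mul_right_cancel₀ hi this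

/-- If `ν` and `ν + k lam` with `k > 0` are both nonnegative, then so is `ν + (k - 1) lam`, which
lies between them. -/
lemma sub_nonneg_of_pos {n : ℕ} {ν lam : Fin n → ℤ} {k : ℤ} (hk : 0 < k) (h0 : 0 ≤ ν)
    (h1 : 0 ≤ ν + k • lam) : 0 ≤ ν + k • lam - lam := by
  intro i
  have a0 := h0 i
  have a1 := h1 i
  simp only [Pi.zero_apply, Pi.add_apply, Pi.sub_apply, Pi.smul_apply, smul_eq_mul] at *
  rcases le_total 0 (lam i) with h | h <;> nlinarith

/-- Example 2.5 of Scarf–Woods, `n = d + 1`. If the columns of the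
`d × (d+1)` integer matrix `A` span `ℝ^d` and admit `l` with `⟨l, aᵢ⟩ < 0`, then
`Λ = {λ : Aλ = 0}` is a rank-one lattice, and for any generator `λ` of `Λ` and
`a = A·max({λ,0})`, for every `b`:
`#{ν ≥ 0 : Aν = b} − #{ν ≥ 0 : Aν = b − a}` is `1` if `b ∈ G` and `0` otherwise;
i.e. `Σ_{b ∈ G} z^b = (1 − z^a)/Π_i (1 − z^{aᵢ})` coefficientwise. -/
theorem statement16 {d : ℕ} (A : Matrix (Fin d) (Fin (d + 1)) ℤ)
    (hspan : Submodule.span ℝ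
      (Set.range fun j : Fin (d + 1) => fun i : Fin d => (A i j : ℝ)) = ⊤)
    (l : Fin d → ℝ) (hl : ∀ j : Fin (d + 1), (∑ i, l i * (A i j : ℝ)) < 0) :
    (∃ lam₀ : Fin (d + 1) → ℤ, lam₀ ≠ 0 ∧ A.mulVec lam₀ = 0 ∧
        ∀ μ : Fin (d + 1) → ℤ, A.mulVec μ = 0 → ∃ k : ℤ, μ = k • lam₀) ∧
    ∀ lam : Fin (d + 1) → ℤ, A.mulVec lam = 0 →
      (∀ μ : Fin (d + 1) → ℤ, A.mulVec μ = 0 → ∃ k : ℤ, μ = k • lam) →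
      ∀ b : Fin d → ℤ,
        (Set.ncard {ν : Fin (d + 1) → ℤ | 0 ≤ ν ∧ A.mulVec ν = b} : ℤ) -
            (Set.ncard {ν : Fin (d + 1) → ℤ | 0 ≤ ν ∧
              A.mulVec ν = b - A.mulVec (fun i => max (lam i) 0)} : ℤ) =
          if ∃ ξ : Fin (d + 1) → ℤ, 0 ≤ ξ ∧ A.mulVec ξ = b then 1 else 0 := by
  obtain ⟨lam₀, hne, hA, hgen₀⟩ := exists_generator A hspan
  refine ⟨⟨lam₀, hne, hA, hgen₀⟩, fun lam hlam hgen b => ?_⟩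
  have hlam0 : lam ≠ 0 := by
    rintro rfl
    obtain ⟨k, hk⟩ := hgen lam₀ hA
    exact hne (by simpa using hk)
  set F := {ν : Fin (d + 1) → ℤ | 0 ≤ ν ∧ A.mulVec ν = b} with hFdef
  set p : Fin (d + 1) → ℤ := fun i => max (lam i) 0 with hp
  have hF : F.Finite := fiber_finite A l hl b
  have himg : Set.image (fun ν => ν + p) {ν | 0 ≤ ν ∧ A.mulVec ν = b - A.mulVec p} =
      {ν | ν ∈ F ∧ ν - lam ∈ F} := by
    ext ν
    constructor
    · rintro ⟨ξ, ⟨h0, h1⟩, rfl⟩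
      refine ⟨⟨fun i => ?_, ?_⟩, fun i => ?_, ?_⟩
      · exact add_nonneg (h0 i) (le_max_right _ _)
      · simp [Matrix.mulVec_add, h1]
      · have := h0 i
        have := le_max_left (lam i) 0
        simp only [Pi.zero_apply, Pi.add_apply, Pi.sub_apply, hp] at *
        linarith
      · simp [Matrix.mulVec_add, Matrix.mulVec_sub, h1, hlam]
    · rintro ⟨⟨h0, h1⟩, h2, -⟩
      refine ⟨ν - p, ⟨fun i => ?_, ?_⟩, by simp⟩
      · have a := h0 i
        have b := h2 i
        simp only [Pi.zero_apply, Pi.sub_apply, hp] at *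
        have := max_le (sub_nonneg.1 b) a
        linarith
      · rw [Matrix.mulVec_sub, h1]
  rw [← Set.ncard_image_of_injective {ν | 0 ≤ ν ∧ A.mulVec ν = b - A.mulVec p}
    (add_left_injective p), himg]
  split_ifs with hex
  · obtain ⟨ν, hν, hν'⟩ := exists_first F hF hex lam hlam0
    have hset : F = insert ν {ν | ν ∈ F ∧ ν - lam ∈ F} := by
      ext ξ
      constructor
      · intro hξ
        by_cases hξ' : ξ - lam ∈ F
        · exact Or.inr ⟨hξ, hξ'⟩
        left
        obtain ⟨k, hk⟩ := hgen (ξ - ν) (by rw [Matrix.mulVec_sub, hξ.2, hν.2, sub_self])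
        have hstep : ∀ x ∈ F, 0 ≤ x - lam → x - lam ∈ F := fun x hx h =>
          ⟨h, by rw [Matrix.mulVec_sub, hx.2, hlam, sub_zero]⟩
        have e1 : ξ = ν + k • lam := by rw [← hk]; abel
        have e2 : ν = ξ + (-k) • lam := by rw [neg_smul, ← hk]; abel
        rcases lt_trichotomy k 0 with h | h | h
        · refine absurd (hstep _ hν ?_) hν'
          have := sub_nonneg_of_pos (lam := lam) (neg_pos.2 h) hξ.1 (e2 ▸ hν.1)
          rwa [← e2] at this
        · rw [e1, h]; simp
        · refine absurd (hstep _ hξ ?_) hξ'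
          have := sub_nonneg_of_pos (lam := lam) h hν.1 (e1 ▸ hξ.1)
          rwa [← e1] at this
      · rintro (rfl | h)
        exacts [hν, h.1]
    have hcard : F.ncard = {ν | ν ∈ F ∧ ν - lam ∈ F}.ncard + 1 := by
      conv_lhs => rw [hset]
      exact Set.ncard_insert_of_notMem (fun h => hν' h.2) (hF.subset fun _ h => h.1)
    rw [hcard]; push_cast; ring
  · have hE : F = ∅ := Set.eq_empty_of_forall_notMem fun x hx => hex ⟨x, hx⟩
    simp [hE]
end
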